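/- Let p_1 < p_2 < ... denote the sequence of all primes, let k ≥ 0 and r ≥ 1 be integers, and for n ≥ 1 let J_r(n) = ∑_{d | n} μ(n/d)·d^r denote the Jordan totient of order r. Then the limit as N → ∞ of (∑_{i=1}^N p_i^k · J_r(p_i − 1)) / (∑_{i=1}^N p_i^k · (p_i − 1)^r) exists and equals the rank-r Artin constant A_r = ∏_p (1 − 1/(p^r (p − 1))), the infinite product over all primes p. -/

import Mathlib

open Filter

/-- The Jordan totient `J_r(n) = ∑_{d | n} μ(n/d) d^r`. -/
def jordanTotient (r n : ℕ) : ℤ :=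
  ∑ d ∈ n.divisors, ArithmeticFunction.moebius (n / d) * (d : ℤ) ^ r

/-- The rank-`r` Artin constant `A_r = ∏_p (1 - 1/(p^r (p - 1)))`, product over all primes. -/
noncomputable def artinConstantRank (r : ℕ) : ℝ :=
  ∏' p : Nat.Primes, (1 - 1 / (((p : ℕ) : ℝ) ^ r * (((p : ℕ) : ℝ) - 1)))

/-!
Since `J_r(m) = m ^ r * ∑_{d ∣ m} μ(d) / d ^ r`, the numerator averages the divisor sums
`∑_{d ∣ p - 1} μ(d) / d ^ r` against the weights `p ^ k * (p - 1) ^ r`. With the weight `log p`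
instead, interchanging the sums gives `∑_d μ(d) / d ^ r * θ(n; d, 1)`, where
`θ(n; d, 1) ~ n / φ(d)` by the prime number theorem in arithmetic progressions, a case of the
Wiener–Ikehara theorem. The bound `θ(n; d, 1) ≪ n log (2 d) / d`, uniform in `d` and `n`, comes from
`n!` dividing `d ^ n * ∏_{j < n} (d j + 1)`, as in Chebyshev's argument with binomial coefficients;
it allows passing to the limit termwise, and the limiting series `∑ μ(d) / (d ^ r φ(d))` is the
Artin constant by its Euler product. Partial summation against `p ^ k * (p - 1) ^ r / log p`, which
is monotone and doubling, restores the original weights.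
-/

section FourierKernel

open MeasureTheory FourierTransform

open scoped SchwartzMap

lemma fourier_comp_div {E : Type*} [NormedAddCommGroup E] [NormedSpace ℂ E] (k : ℝ → E) {l : ℝ}
    (hl : 0 < l) (v : ℝ) : 𝓕 (fun t ↦ k (t / l)) v = l • 𝓕 k (l * v) := by
  rw [Real.fourier_real_eq_integral_exp_smul, Real.fourier_real_eq_integral_exp_smul,
    ← abs_of_pos hl, ← Measure.integral_comp_div, abs_of_pos hl]
  congr 1 with t
  congr 4
  field_simp

lemma exists_schwartzMap_hasCompactSupport_apply_zero_eq_one :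
    ∃ S : 𝓢(ℝ, ℂ), HasCompactSupport S ∧ S 0 = 1 := by
  let f : ContDiffBump (0 : ℝ) := ⟨1, 2, one_pos, one_lt_two⟩
  have hsupp : HasCompactSupport fun t ↦ (f t : ℂ) :=
    f.hasCompactSupport.comp_left (g := fun x : ℝ ↦ (x : ℂ)) Complex.ofReal_zero
  refine ⟨hsupp.toSchwartzMap (Complex.ofRealCLM.contDiff.comp f.contDiff), hsupp, ?_⟩
  exact congrArg Complex.ofReal (f.one_of_mem_closedBall (Metric.mem_closedBall_self f.rIn_pos.le))

lemma integral_fourier_schwartzMap {V E : Type*} [NormedAddCommGroup V] [InnerProductSpace ℝ V]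
    [FiniteDimensional ℝ V] [MeasurableSpace V] [BorelSpace V] [NormedAddCommGroup E]
    [NormedSpace ℂ E] [CompleteSpace E] (S : 𝓢(V, E)) : ∫ v, (𝓕 S) v = S 0 := by
  calc ∫ v, (𝓕 S) v = (𝓕⁻ (𝓕 S)) 0 := by
        rw [SchwartzMap.fourierInv_coe, Real.fourierInv_eq']
        simp only [inner_zero_right, mul_zero, Complex.ofReal_zero, zero_mul, Complex.exp_zero,
          one_smul]
    _ = S 0 := by rw [FourierTransform.fourierInv_fourier_eq]

lemma exists_bandlimited_kernel {ε : ℝ} (hε : 0 < ε) :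
    ∃ k : ℝ → ℂ, Continuous k ∧ HasCompactSupport k ∧ Integrable (𝓕 k) ∧ ∫ v, 𝓕 k v = 1 ∧
      Integrable (fun v ↦ |v| * ‖𝓕 k v‖) ∧ ∫ v, |v| * ‖𝓕 k v‖ ≤ ε := by
  obtain ⟨S, hsupp, hS0⟩ := exists_schwartzMap_hasCompactSupport_apply_zero_eq_one
  set g : ℝ → ℝ := fun v ↦ |v| * ‖(𝓕 S) v‖ with hg
  have hgi : Integrable g := ((𝓕 S).integrable_pow_mul volume 1).congr
    (Eventually.of_forall fun v ↦ by simp only [hg, pow_one, Real.norm_eq_abs])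
  -- Dilating `S` by `l` divides the first moment of its Fourier transform by `l`.
  set l := (∫ v, g v) / ε + 1
  have hl : 0 < l := add_pos_of_nonneg_of_pos
    (div_nonneg (integral_nonneg fun v ↦ by positivity) hε.le) one_pos
  have hscale : 𝓕 (fun t ↦ S (t / l)) = fun v ↦ l • (𝓕 S) (l * v) := by
    rw [SchwartzMap.fourier_coe]
    exact funext (fourier_comp_div S hl)
  have hmoment : (fun v ↦ |v| * ‖𝓕 (fun t ↦ S (t / l)) v‖) = fun v ↦ g (l * v) := by
    funext v
    simp only [hscale, hg, norm_smul, Real.norm_eq_abs, abs_mul]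
    ring
  refine ⟨fun t ↦ S (t / l), S.continuous.comp (continuous_id.div_const l), ?_, ?_, ?_, ?_, ?_⟩
  · simpa only [smul_eq_mul, ← div_eq_inv_mul] using hsupp.comp_smul (inv_ne_zero hl.ne')
  · rw [hscale]
    exact ((𝓕 S).integrable.comp_mul_left' hl.ne').smul l
  · rw [hscale, integral_smul, Measure.integral_comp_mul_left, abs_of_pos (inv_pos.mpr hl),
      smul_inv_smul₀ hl.ne', integral_fourier_schwartzMap, hS0]
  · rw [hmoment]
    exact hgi.comp_mul_left' hl.ne'
  · rw [hmoment, Measure.integral_comp_mul_left, abs_of_pos (inv_pos.mpr hl), smul_eq_mul,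
      inv_mul_le_iff₀ hl, add_mul, div_mul_cancel₀ _ hε.ne', one_mul]
    exact le_add_of_nonneg_right hε.le

end FourierKernel

section BoundaryValues

open MeasureTheory FourierTransform Set

open scoped Topology Real

variable {ρ : ℝ → ℂ} {M : ℝ} {G : ℂ → ℂ} {k : ℝ → ℂ}

lemma integrableOn_mul_exp_neg (hρ : Measurable ρ) (hM : ∀ u, ‖ρ u‖ ≤ M) {s : ℂ} (hs : 0 < s.re) :
    IntegrableOn (fun u : ℝ ↦ ρ u * Complex.exp (-s * u)) (Ioi 0) :=
  (integrableOn_exp_mul_complex_Ioi (a := -s) (by simpa using hs) 0).bdd_mul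
    hρ.aestronglyMeasurable (Eventually.of_forall hM)

lemma setIntegral_mul_exp_neg_mul_fourier (hρ : Measurable ρ) (hM : ∀ u, ‖ρ u‖ ≤ M)
    (hG : ∀ s : ℂ, 0 < s.re → G s = ∫ u in Ioi (0 : ℝ), ρ u * Complex.exp (-s * u))
    (hk : Integrable k) {δ : ℝ} (hδ : 0 < δ) :
    ∫ u in Ioi (0 : ℝ), ρ u * Complex.exp (-δ * u) * 𝓕 k u =
      ∫ t : ℝ, k t * G (δ + 2 * π * t * Complex.I) := by
  have hflip := VectorFourier.integral_fourierIntegral_smul_eq_flip (L := innerₗ ℝ)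
    Real.continuous_fourierChar continuous_inner
    (integrableOn_mul_exp_neg hρ hM (s := δ) (by simpa using hδ)) hk
  rw [flip_innerₗ] at hflip
  refine hflip.symm.trans (integral_congr_ae (Eventually.of_forall fun t ↦ ?_))
  dsimp only
  rw [smul_eq_mul, mul_comm, hG _ (by simpa using hδ), VectorFourier.fourierIntegral]
  congr 2 with u
  rw [Circle.smul_def, Real.fourierChar_apply, smul_eq_mul, mul_left_comm, ← Complex.exp_add]
  congr 2
  simp
  ring

lemma tendsto_setIntegral_mul_exp_neg_mul (hρ : Measurable ρ) (hM : ∀ u, ‖ρ u‖ ≤ M) {g : ℝ → ℂ}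
    (hg : Integrable g) :
    Tendsto (fun δ : ℝ ↦ ∫ u in Ioi (0 : ℝ), ρ u * Complex.exp (-δ * u) * g u) (𝓝[>] 0)
      (𝓝 (∫ u in Ioi (0 : ℝ), ρ u * g u)) := by
  refine tendsto_integral_filter_of_dominated_convergence (fun u ↦ M * ‖g u‖) ?_ ?_ ?_ ?_
  · exact Eventually.of_forall fun δ ↦ ((hρ.mul (by fun_prop)).aestronglyMeasurable).mul
      hg.aestronglyMeasurable.restrict
  · filter_upwards [self_mem_nhdsWithin] with δ (hδ : 0 < δ)
    filter_upwards [ae_restrict_mem measurableSet_Ioi] with u (hu : 0 < u)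
    have hexp : ‖Complex.exp (-δ * u)‖ ≤ 1 := by
      rw [Complex.norm_exp, Real.exp_le_one_iff]
      simpa using (mul_pos hδ hu).le
    calc ‖ρ u * Complex.exp (-δ * u) * g u‖ = ‖ρ u‖ * ‖Complex.exp (-δ * u)‖ * ‖g u‖ := by
          rw [norm_mul, norm_mul]
      _ ≤ M * 1 * ‖g u‖ := by
          gcongr
          · exact (norm_nonneg _).trans (hM 0)
          · exact hM u
      _ = M * ‖g u‖ := by rw [mul_one]
  · exact (hg.norm.const_mul M).restrict
  · refine Eventually.of_forall fun u ↦ ?_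
    have hcont : Continuous fun δ : ℝ ↦ ρ u * Complex.exp (-δ * u) * g u := by fun_prop
    simpa using (hcont.tendsto 0).mono_left nhdsWithin_le_nhds

lemma tendsto_integral_mul_boundary (hG : ContinuousOn G {s | 0 ≤ s.re}) (hk : Continuous k)
    (hksupp : HasCompactSupport k) :
    Tendsto (fun δ : ℝ ↦ ∫ t : ℝ, k t * G (δ + 2 * π * t * Complex.I)) (𝓝[>] 0)
      (𝓝 (∫ t : ℝ, k t * G (2 * π * t * Complex.I))) := by
  have hmaps : MapsTo (fun z : ℝ × ℝ ↦ (z.1 + 2 * π * z.2 * Complex.I : ℂ))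
      (Icc 0 1 ×ˢ tsupport k) {s | 0 ≤ s.re} := fun z hz ↦ by simpa using hz.1.1
  obtain ⟨C, hC⟩ := (isCompact_Icc.prod hksupp).exists_bound_of_continuousOn
    (hG.comp (by fun_prop) hmaps)
  have hIoc : ∀ᶠ δ : ℝ in 𝓝[>] 0, δ ∈ Ioc 0 1 := Ioc_mem_nhdsGT one_pos
  refine tendsto_integral_filter_of_dominated_convergence (fun t ↦ ‖k t‖ * C) ?_ ?_ ?_ ?_
  · filter_upwards [hIoc] with δ hδ
    exact (hk.mul (hG.comp_continuous (by fun_prop) fun t ↦ by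
      simpa using hδ.1.le)).aestronglyMeasurable
  · filter_upwards [hIoc] with δ hδ
    refine Eventually.of_forall fun t ↦ ?_
    rw [norm_mul]
    by_cases ht : t ∈ tsupport k
    · gcongr
      exact hC (δ, t) ⟨Ioc_subset_Icc_self hδ, ht⟩
    · simp [image_eq_zero_of_notMem_tsupport ht]
  · exact (hk.integrable_of_hasCompactSupport hksupp).norm.mul_const C
  · refine Eventually.of_forall fun t ↦ Tendsto.const_mul _ ?_
    refine (hG (2 * π * t * Complex.I) (by simp)).tendsto.comp (tendsto_nhdsWithin_iff.mpr ⟨?_, ?_⟩)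
    · have hcont : Continuous fun δ : ℝ ↦ (δ + 2 * π * t * Complex.I : ℂ) := by fun_prop
      simpa using (hcont.tendsto 0).mono_left nhdsWithin_le_nhds
    · filter_upwards [hIoc] with δ hδ
      simpa using hδ.1.le

lemma setIntegral_mul_fourier_eq (hρ : Measurable ρ) (hM : ∀ u, ‖ρ u‖ ≤ M)
    (hG : ContinuousOn G {s | 0 ≤ s.re})
    (hGρ : ∀ s : ℂ, 0 < s.re → G s = ∫ u in Ioi (0 : ℝ), ρ u * Complex.exp (-s * u))
    (hk : Continuous k) (hksupp : HasCompactSupport k) (hkF : Integrable (𝓕 k)) :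
    ∫ u in Ioi (0 : ℝ), ρ u * 𝓕 k u = ∫ t : ℝ, k t * G (2 * π * t * Complex.I) := by
  refine tendsto_nhds_unique (tendsto_setIntegral_mul_exp_neg_mul hρ hM hkF)
    ((tendsto_integral_mul_boundary hG hk hksupp).congr' ?_)
  filter_upwards [self_mem_nhdsWithin] with δ hδ
  exact (setIntegral_mul_exp_neg_mul_fourier hρ hM hGρ
    (hk.integrable_of_hasCompactSupport hksupp) hδ).symm

lemma fourier_exp_mul (k : ℝ → ℂ) (x u : ℝ) :
    𝓕 (fun t : ℝ ↦ Complex.exp (2 * π * t * x * Complex.I) * k t) u = 𝓕 k (u - x) := by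
  rw [Real.fourier_real_eq_integral_exp_smul, Real.fourier_real_eq_integral_exp_smul]
  congr 1 with t
  rw [smul_eq_mul, smul_eq_mul, ← mul_assoc, ← Complex.exp_add]
  congr 2
  push_cast
  ring

theorem tendsto_setIntegral_mul_fourier_sub (hρ : Measurable ρ) (hM : ∀ u, ‖ρ u‖ ≤ M)
    (hG : ContinuousOn G {s | 0 ≤ s.re})
    (hGρ : ∀ s : ℂ, 0 < s.re → G s = ∫ u in Ioi (0 : ℝ), ρ u * Complex.exp (-s * u))
    (hk : Continuous k) (hksupp : HasCompactSupport k) (hkF : Integrable (𝓕 k)) :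
    Tendsto (fun x ↦ ∫ u in Ioi (0 : ℝ), ρ u * 𝓕 k (u - x)) atTop (𝓝 0) := by
  have hRL := (Real.zero_at_infty_fourier fun t : ℝ ↦ k t * G (2 * π * t * Complex.I)).comp
    (tendsto_neg_atTop_atBot.mono_right atBot_le_cocompact)
  refine hRL.congr fun x ↦ ?_
  simp_rw [← fourier_exp_mul k x]
  have hmodsupp : HasCompactSupport fun t : ℝ ↦ Complex.exp (2 * π * t * x * Complex.I) * k t :=
    hksupp.mul_left
  rw [setIntegral_mul_fourier_eq hρ hM hG hGρ (by fun_prop) hmodsupp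
    ((hkF.comp_sub_right x).congr (Eventually.of_forall fun u ↦ (fourier_exp_mul k x u).symm)),
    Function.comp, Real.fourier_real_eq_integral_exp_smul]
  congr 1 with t
  rw [smul_eq_mul, ← mul_assoc]
  congr 3
  push_cast
  ring

end BoundaryValues

section WindowAverages

open FourierTransform MeasureTheory Set

open scoped Topology

variable {ρ κ : ℝ → ℂ} {M : ℝ}

lemma intervalIntegrable_of_norm_le (hρ : Measurable ρ) (hM : ∀ u, ‖ρ u‖ ≤ M) (a b : ℝ) :
    IntervalIntegrable ρ volume a b :=
  (intervalIntegrable_const (c := M)).mono_fun' hρ.aestronglyMeasurable (Eventually.of_forall hM)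

lemma norm_integral_window_sub_le (hρ : Measurable ρ) (hM : ∀ u, ‖ρ u‖ ≤ M) (h x v : ℝ) :
    ‖(∫ y in x..x + h, ρ y) - ∫ y in (x + v)..(x + v + h), ρ y‖ ≤ 2 * M * |v| := by
  have hint := intervalIntegrable_of_norm_le hρ hM
  have hbound (a b : ℝ) : ‖∫ y in a..b, ρ y‖ ≤ M * |b - a| :=
    intervalIntegral.norm_integral_le_of_norm_le_const fun u _ ↦ hM u
  rw [intervalIntegral.integral_interval_sub_interval_comm (hint _ _) (hint _ _) (hint _ _)]
  calc _ ≤ M * |x + v - x| + M * |x + v + h - (x + h)| :=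
        (norm_sub_le _ _).trans (add_le_add (hbound _ _) (hbound _ _))
    _ = 2 * M * |v| := by ring_nf

lemma continuous_integral_window (hρ : Measurable ρ) (hM : ∀ u, ‖ρ u‖ ≤ M) (h : ℝ) :
    Continuous fun x ↦ ∫ y in x..x + h, ρ y := by
  have hint := intervalIntegrable_of_norm_le hρ hM
  have hprim := intervalIntegral.continuous_primitive hint 0
  simp_rw [← fun x ↦ intervalIntegral.integral_interval_sub_left (hint 0 (x + h)) (hint 0 x)]
  fun_prop

lemma integrable_integral_window_mul (hρ : Measurable ρ) (hM : ∀ u, ‖ρ u‖ ≤ M) (hκ : Integrable κ)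
    (h x : ℝ) : Integrable fun v ↦ (∫ y in (x + v)..(x + v + h), ρ y) * κ v := by
  refine hκ.bdd_mul (c := M * |h|) ?_ (Eventually.of_forall fun v ↦ ?_)
  · exact ((continuous_integral_window hρ hM h).comp
      (continuous_const_add x)).aestronglyMeasurable
  · simpa using intervalIntegral.norm_integral_le_of_norm_le_const (a := x + v) (b := x + v + h)
      fun u _ ↦ hM u

lemma norm_integral_window_sub_integral_mul_le (hρ : Measurable ρ) (hM : ∀ u, ‖ρ u‖ ≤ M)
    (hκ : Integrable κ) (hκ1 : ∫ v, κ v = 1) (hκm : Integrable fun v ↦ |v| * ‖κ v‖) (h x : ℝ) :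
    ‖(∫ y in x..x + h, ρ y) - ∫ v, (∫ y in (x + v)..(x + v + h), ρ y) * κ v‖ ≤
      2 * M * ∫ v, |v| * ‖κ v‖ := by
  set R := ∫ y in x..x + h, ρ y
  have hR : R = ∫ v, R * κ v := by rw [integral_const_mul, hκ1, mul_one]
  rw [hR, ← integral_sub (hκ.const_mul R) (integrable_integral_window_mul hρ hM hκ h x),
    ← integral_const_mul]
  refine norm_integral_le_of_norm_le (hκm.const_mul _) (Eventually.of_forall fun v ↦ ?_)
  rw [← sub_mul, norm_mul, ← mul_assoc]
  gcongr
  exact norm_integral_window_sub_le hρ hM h x v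

lemma integral_integral_window_mul (hρ : Measurable ρ) (hM : ∀ u, ‖ρ u‖ ≤ M) (hκ : Integrable κ)
    {h : ℝ} (hh : 0 ≤ h) (x : ℝ) :
    ∫ v, (∫ y in (x + v)..(x + v + h), ρ y) * κ v =
      ∫ y in x..x + h, ∫ u, ρ u * κ (u - y) := by
  have hint : Integrable (Function.uncurry fun y v ↦ ρ (v + y) * κ v)
      ((volume.restrict (Ioc x (x + h))).prod volume) := by
    have hprod : Integrable (fun z : ℝ × ℝ ↦ (1 : ℂ) * κ z.2)
        ((volume.restrict (Ioc x (x + h))).prod volume) := (integrable_const 1).mul_prod hκ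
    simpa [Function.uncurry_def] using hprod.bdd_mul (f := fun z : ℝ × ℝ ↦ ρ (z.2 + z.1))
      (hρ.comp (by fun_prop)).aestronglyMeasurable (Eventually.of_forall fun z ↦ hM _)
  have hle : x ≤ x + h := le_add_of_nonneg_right hh
  calc ∫ v, (∫ y in (x + v)..(x + v + h), ρ y) * κ v
      = ∫ v, ∫ y in Ioc x (x + h), ρ (v + y) * κ v := by
        congr 1 with v
        rw [integral_mul_const, ← intervalIntegral.integral_of_le hle,
          intervalIntegral.integral_comp_add_left]
        ring_nf
    _ = ∫ y in Ioc x (x + h), ∫ v, ρ (v + y) * κ v := (integral_integral_swap hint).symm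
    _ = ∫ y in x..x + h, ∫ u, ρ u * κ (u - y) := by
        rw [intervalIntegral.integral_of_le hle]
        congr 1 with y
        rw [← integral_add_right_eq_self (fun u ↦ ρ u * κ (u - y)) y]
        simp only [add_sub_cancel_right]

lemma tendsto_integral_window_zero {E : Type*} [NormedAddCommGroup E] [NormedSpace ℝ E] {F : ℝ → E}
    (hF : Tendsto F atTop (𝓝 0)) {h : ℝ} (hh : 0 ≤ h) :
    Tendsto (fun x ↦ ∫ y in x..x + h, F y) atTop (𝓝 0) := by
  rw [Metric.tendsto_atTop] at hF ⊢
  intro ε hε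
  obtain ⟨X, hX⟩ := hF (ε / (h + 1)) (by positivity)
  refine ⟨X, fun x hx ↦ ?_⟩
  rw [dist_zero_right]
  calc ‖∫ y in x..x + h, F y‖ ≤ ε / (h + 1) * |x + h - x| := by
        refine intervalIntegral.norm_integral_le_of_norm_le_const fun y hy ↦ ?_
        rw [uIoc_of_le (le_add_of_nonneg_right hh)] at hy
        exact (dist_zero_right (F y) ▸ hX y (hx.trans hy.1.le)).le
    _ = ε * (h / (h + 1)) := by rw [add_sub_cancel_left, abs_of_nonneg hh]; ring
    _ < ε := mul_lt_of_lt_one_right hε ((div_lt_one (by positivity)).mpr (lt_add_one h))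

theorem tendsto_integral_window_of_tendsto_integral_kernel (hρ : Measurable ρ)
    (hM : ∀ u, ‖ρ u‖ ≤ M)
    (hker : ∀ ε > 0, ∃ κ : ℝ → ℂ, Integrable κ ∧ ∫ v, κ v = 1 ∧
      Integrable (fun v ↦ |v| * ‖κ v‖) ∧ ∫ v, |v| * ‖κ v‖ ≤ ε ∧
      Tendsto (fun x ↦ ∫ u, ρ u * κ (u - x)) atTop (𝓝 0)) {h : ℝ} (hh : 0 ≤ h) :
    Tendsto (fun x ↦ ∫ y in x..x + h, ρ y) atTop (𝓝 0) := by
  have hM0 : 0 ≤ M := (norm_nonneg _).trans (hM 0)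
  rw [Metric.tendsto_nhds]
  intro ε hε
  obtain ⟨κ, hκ, hκ1, hκm, hκε, hlim⟩ := hker (ε / (4 * (M + 1))) (by positivity)
  filter_upwards [Metric.tendsto_nhds.mp (tendsto_integral_window_zero hlim hh) (ε / 2)
    (half_pos hε)] with x hx
  rw [dist_zero_right, ← integral_integral_window_mul hρ hM hκ hh] at hx
  rw [dist_zero_right]
  have herr : 2 * M * ∫ v, |v| * ‖κ v‖ ≤ ε / 2 := by
    calc 2 * M * ∫ v, |v| * ‖κ v‖ ≤ 2 * (M + 1) * (ε / (4 * (M + 1))) := by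
          gcongr
          linarith
      _ = ε / 2 := by field_simp; ring
  linarith [norm_le_norm_add_norm_sub' (∫ y in x..x + h, ρ y)
    (∫ v, (∫ y in (x + v)..(x + v + h), ρ y) * κ v),
    norm_integral_window_sub_integral_mul_le hρ hM hκ hκ1 hκm h x]

theorem tendsto_integral_window_of_laplace {G : ℂ → ℂ} (hρ : Measurable ρ)
    (hM : ∀ u, ‖ρ u‖ ≤ M) (hG : ContinuousOn G {s | 0 ≤ s.re})
    (hGρ : ∀ s : ℂ, 0 < s.re → G s = ∫ u in Ioi (0 : ℝ), ρ u * Complex.exp (-s * u))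
    {h : ℝ} (hh : 0 ≤ h) : Tendsto (fun x ↦ ∫ y in x..x + h, ρ y) atTop (𝓝 0) := by
  have hind : Tendsto (fun x ↦ ∫ y in x..x + h, (Ioi 0).indicator ρ y) atTop (𝓝 0) := by
    refine tendsto_integral_window_of_tendsto_integral_kernel (hρ.indicator measurableSet_Ioi)
      (fun u ↦ (norm_indicator_le_norm_self ρ u).trans (hM u)) (fun ε hε ↦ ?_) hh
    obtain ⟨k, hk, hksupp, hkF, hk1, hkm, hkε⟩ := exists_bandlimited_kernel hε
    refine ⟨𝓕 k, hkF, hk1, hkm, hkε, ?_⟩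
    refine (tendsto_setIntegral_mul_fourier_sub hρ hM hG hGρ hk hksupp hkF).congr fun x ↦ ?_
    rw [← integral_indicator measurableSet_Ioi]
    simp only [indicator_mul_left]
  refine hind.congr' ?_
  filter_upwards [eventually_gt_atTop 0] with x hx
  refine intervalIntegral.integral_congr fun y hy ↦ indicator_of_mem ?_ ρ
  rw [uIcc_of_le (le_add_of_nonneg_right hh)] at hy
  exact hx.trans_le hy.1

end WindowAverages

section SlowlyDecreasing

open MeasureTheory Set

open scoped Topology

variable {B : ℝ → ℝ}

lemma intervalIntegrable_of_monotone_mul_exp (hmono : Monotone fun u ↦ B u * Real.exp u) (a b : ℝ) :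
    IntervalIntegrable B volume a b := by
  have hexp : ContinuousOn (fun u ↦ Real.exp (-u)) (uIcc a b) := by fun_prop
  simpa [mul_assoc, ← Real.exp_add] using hmono.intervalIntegrable.mul_continuousOn hexp

lemma le_mul_exp_of_monotone_mul_exp (hB : ∀ u, 0 ≤ B u)
    (hmono : Monotone fun u ↦ B u * Real.exp u) {x y h : ℝ} (hxy : x ≤ y) (hyx : y ≤ x + h) :
    B x ≤ B y * Real.exp h := by
  refine le_of_mul_le_mul_right ?_ (Real.exp_pos x)
  calc B x * Real.exp x ≤ B y * Real.exp y := hmono hxy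
    _ ≤ B y * Real.exp (h + x) := by gcongr; exacts [hB y, by linarith]
    _ = B y * Real.exp h * Real.exp x := by rw [Real.exp_add, mul_assoc]

lemma le_exp_mul_average (hB : ∀ u, 0 ≤ B u) (hmono : Monotone fun u ↦ B u * Real.exp u) {h : ℝ}
    (hh : 0 < h) (x : ℝ) : B x ≤ Real.exp h * ((∫ y in x..x + h, B y) / h) := by
  have hint := intervalIntegrable_of_monotone_mul_exp hmono x (x + h)
  have hle : ∫ _ in x..x + h, B x ≤ ∫ y in x..x + h, B y * Real.exp h :=
    intervalIntegral.integral_mono_on (by linarith) intervalIntegrable_const (hint.mul_const _)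
      fun y hy ↦ le_mul_exp_of_monotone_mul_exp hB hmono hy.1 hy.2
  rw [intervalIntegral.integral_const, intervalIntegral.integral_mul_const, add_sub_cancel_left,
    smul_eq_mul] at hle
  rw [mul_div_assoc', le_div_iff₀ hh]
  linarith

lemma exp_neg_mul_average_le (hB : ∀ u, 0 ≤ B u) (hmono : Monotone fun u ↦ B u * Real.exp u)
    {h : ℝ} (hh : 0 < h) (x : ℝ) :
    Real.exp (-h) * ((∫ y in x..x + h, B y) / h) ≤ B (x + h) := by
  have hint := intervalIntegrable_of_monotone_mul_exp hmono x (x + h)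
  have hle : ∫ y in x..x + h, B y ≤ ∫ _ in x..x + h, B (x + h) * Real.exp h :=
    intervalIntegral.integral_mono_on (by linarith) hint intervalIntegrable_const
      fun y hy ↦ le_mul_exp_of_monotone_mul_exp hB hmono hy.2 (by linarith [hy.1])
  rw [intervalIntegral.integral_const, add_sub_cancel_left, smul_eq_mul] at hle
  rw [Real.exp_neg, inv_mul_le_iff₀ (Real.exp_pos h), div_le_iff₀ hh]
  linarith

theorem tendsto_of_tendsto_integral_window (hB : ∀ u, 0 ≤ B u)
    (hmono : Monotone fun u ↦ B u * Real.exp u) {c : ℝ}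
    (hav : ∀ h > 0, Tendsto (fun x ↦ ∫ y in x..x + h, B y) atTop (𝓝 (c * h))) :
    Tendsto B atTop (𝓝 c) := by
  have hlim (h : ℝ) (hh : 0 < h) (b : ℝ) :
      Tendsto (fun x ↦ b * ((∫ y in x..x + h, B y) / h)) atTop (𝓝 (b * c)) := by
    simpa [hh.ne'] using ((hav h hh).div_const h).const_mul b
  have hsmall (f : ℝ → ℝ) (hf : Continuous f) (hf0 : f 0 = c) :
      Tendsto f (𝓝[>] 0) (𝓝 c) := hf0 ▸ (hf.tendsto 0).mono_left nhdsWithin_le_nhds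
  refine tendsto_order.mpr ⟨fun a ha ↦ ?_, fun a ha ↦ ?_⟩
  · obtain ⟨h, hah, hh : 0 < h⟩ := ((hsmall (fun h ↦ Real.exp (-h) * c) (by fun_prop)
      (by simp)).eventually_const_lt ha |>.and self_mem_nhdsWithin).exists
    have hshift : ∀ᶠ x in atTop, a < B (x + h) :=
      ((hlim h hh _).eventually_const_lt hah).mono fun x hx ↦
        hx.trans_le (exp_neg_mul_average_le hB hmono hh x)
    simpa using (tendsto_atTop_add_const_right atTop (-h) tendsto_id).eventually hshift
  · obtain ⟨h, hah, hh : 0 < h⟩ := ((hsmall (fun h ↦ Real.exp h * c) (by fun_prop)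
      (by simp)).eventually_lt_const ha |>.and self_mem_nhdsWithin).exists
    exact ((hlim h hh _).eventually_lt_const hah).mono fun x hx ↦
      (le_exp_mul_average hB hmono hh x).trans_lt hx

end SlowlyDecreasing

section WienerIkehara

open Finset MeasureTheory Set

open scoped Topology

/-- The normalized summatory function `u ↦ e⁻ᵘ ∑ f j` over `1 ≤ j ≤ eᵘ`: its convergence at
infinity is that of the means of `f`, and its Laplace transform is governed by the Dirichlet series
of `f`. -/
noncomputable def expMean (f : ℕ → ℝ) (u : ℝ) : ℝ :=
  (∑ j ∈ Finset.Icc 1 ⌊Real.exp u⌋₊, f j) * Real.exp (-u)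

variable {f : ℕ → ℝ} {C : ℝ}

lemma expMean_log_natCast {n : ℕ} (hn : n ≠ 0) :
    expMean f (Real.log n) = (∑ j ∈ Finset.Icc 1 n, f j) / n := by
  rw [expMean, Real.exp_neg, Real.exp_log (by positivity), Nat.floor_natCast, div_eq_mul_inv]

lemma expMean_nonneg (hf : ∀ n, 0 ≤ f n) (u : ℝ) : 0 ≤ expMean f u :=
  mul_nonneg (sum_nonneg fun j _ ↦ hf j) (Real.exp_pos _).le

lemma expMean_le (hC : ∀ n : ℕ, ∑ j ∈ Finset.Icc 1 n, f j ≤ C * n) (hC0 : 0 ≤ C) (u : ℝ) :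
    expMean f u ≤ C := by
  calc expMean f u ≤ C * ⌊Real.exp u⌋₊ * Real.exp (-u) := by
        rw [expMean]
        gcongr
        exact hC _
    _ ≤ C * Real.exp u * Real.exp (-u) := by
        gcongr
        exact Nat.floor_le (Real.exp_pos u).le
    _ = C := by rw [mul_assoc, ← Real.exp_add, add_neg_cancel, Real.exp_zero, mul_one]

lemma monotone_expMean_mul_exp (hf : ∀ n, 0 ≤ f n) :
    Monotone fun u ↦ expMean f u * Real.exp u := by
  intro u v huv
  simp only [expMean, mul_assoc, ← Real.exp_add, neg_add_cancel, Real.exp_zero, mul_one]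
  exact sum_le_sum_of_subset_of_nonneg
    (Finset.Icc_subset_Icc_right (Nat.floor_le_floor (Real.exp_le_exp.mpr huv))) fun j _ _ ↦ hf j

lemma measurable_expMean (f : ℕ → ℝ) : Measurable (expMean f) := by
  have hsum : Measurable fun n : ℕ ↦ ∑ j ∈ Finset.Icc 1 n, f j := measurable_from_top
  exact (hsum.comp (Nat.measurable_floor.comp Real.measurable_exp)).mul (by fun_prop)

lemma LSeries_one_add_eq_mul_integral (hf : ∀ n, 0 ≤ f n)
    (hC : ∀ n : ℕ, ∑ j ∈ Finset.Icc 1 n, f j ≤ C * n) {s : ℂ} (hs : 0 < s.re) :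
    LSeries (fun n ↦ (f n : ℂ)) (1 + s) =
      (1 + s) * ∫ u in Ioi (0 : ℝ), expMean f u * Complex.exp (-s * u) := by
  have hO : (fun n : ℕ ↦ ∑ j ∈ Finset.Icc 1 n, f j) =O[atTop] fun n ↦ (n : ℝ) ^ (1 : ℝ) := by
    refine Asymptotics.IsBigO.of_bound C (Eventually.of_forall fun n ↦ ?_)
    rw [Real.norm_of_nonneg (sum_nonneg fun j _ ↦ hf j)]
    simpa using hC n
  rw [LSeries_eq_mul_integral_of_nonneg f zero_le_one (by simpa using hs) hO hf,
    ← Real.exp_zero, ← integral_comp_exp_Ioi]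
  congr 2 with u
  rw [Complex.real_smul, Complex.cpow_def_of_ne_zero (by exact_mod_cast (Real.exp_pos u).ne'),
    ← Complex.ofReal_log (Real.exp_pos u).le, Real.log_exp, expMean]
  push_cast
  rw [mul_left_comm, mul_assoc, ← Complex.exp_add, ← Complex.exp_add]
  congr 2
  ring

lemma div_one_add_eq_integral_expMean_sub (hf : ∀ n, 0 ≤ f n)
    (hC : ∀ n : ℕ, ∑ j ∈ Finset.Icc 1 n, f j ≤ C * n) (hC0 : 0 ≤ C) (c : ℝ) {s : ℂ}
    (hs : 0 < s.re) :
    (LSeries (fun n ↦ (f n : ℂ)) (1 + s) - c / s - c) / (1 + s) =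
      ∫ u in Ioi (0 : ℝ), ((expMean f u - c : ℝ) : ℂ) * Complex.exp (-s * u) := by
  have hs0 : s ≠ 0 := Complex.ne_zero_of_re_pos hs
  have hs1 : 1 + s ≠ 0 := Complex.ne_zero_of_re_pos (by simpa using by linarith)
  have hexp := integrableOn_exp_mul_complex_Ioi (a := -s) (by simpa using hs) 0
  have hmean : IntegrableOn (fun u : ℝ ↦ (expMean f u : ℂ) * Complex.exp (-s * u)) (Ioi 0) :=
    integrableOn_mul_exp_neg (Complex.measurable_ofReal.comp (measurable_expMean f)) (M := C)
      (fun u ↦ by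
        rw [Function.comp, Complex.norm_real, Real.norm_of_nonneg (expMean_nonneg hf u)]
        exact expMean_le hC hC0 u) hs
  simp only [Complex.ofReal_sub, sub_mul]
  rw [integral_sub hmean (hexp.const_mul _), integral_const_mul,
    integral_exp_mul_complex_Ioi (by simpa using hs), LSeries_one_add_eq_mul_integral hf hC hs]
  simp only [Complex.ofReal_zero, mul_zero, Complex.exp_zero]
  field_simp
  ring

theorem tendsto_sum_div_of_continuousOn_LSeries_sub (hf : ∀ n, 0 ≤ f n)
    (hC : ∀ n : ℕ, ∑ j ∈ Finset.Icc 1 n, f j ≤ C * n) {c : ℝ} {H : ℂ → ℂ}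
    (hH : ContinuousOn H {s | 1 ≤ s.re})
    (hHL : EqOn H (fun s ↦ LSeries (fun n ↦ (f n : ℂ)) s - c / (s - 1)) {s | 1 < s.re}) :
    Tendsto (fun n : ℕ ↦ (∑ j ∈ Finset.Icc 1 n, f j) / n) atTop (𝓝 c) := by
  have hC0 : 0 ≤ C := by simpa using (sum_nonneg fun j _ ↦ hf j).trans (hC 1)
  set ρ : ℝ → ℂ := fun u ↦ (expMean f u - c : ℝ)
  have hρ : Measurable ρ := Complex.measurable_ofReal.comp ((measurable_expMean f).sub_const c)
  have hM (u : ℝ) : ‖ρ u‖ ≤ C + |c| := by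
    rw [Complex.norm_real, Real.norm_eq_abs]
    refine (abs_sub _ _).trans ?_
    rw [abs_of_nonneg (expMean_nonneg hf u)]
    gcongr
    exact expMean_le hC hC0 u
  have hG : ContinuousOn (fun s ↦ (H (1 + s) - c) / (1 + s)) {s | 0 ≤ s.re} := by
    refine ((hH.comp (by fun_prop) fun s hs ↦ by simpa using hs).sub continuousOn_const).div
      (by fun_prop) fun s (hs : 0 ≤ s.re) ↦ ?_
    exact Complex.ne_zero_of_re_pos (by simpa using by linarith)
  have hGρ (s : ℂ) (hs : 0 < s.re) :
      (H (1 + s) - c) / (1 + s) = ∫ u in Ioi (0 : ℝ), ρ u * Complex.exp (-s * u) := by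
    rw [hHL (by simpa using hs), ← div_one_add_eq_integral_expMean_sub hf hC hC0 c hs]
    simp only [add_sub_cancel_left]
  have hlim : Tendsto (expMean f) atTop (𝓝 c) := by
    refine tendsto_of_tendsto_integral_window (expMean_nonneg hf) (monotone_expMean_mul_exp hf)
      fun h hh ↦ ?_
    have hre := (Complex.continuous_re.tendsto 0).comp
      (tendsto_integral_window_of_laplace hρ hM hG hGρ hh.le)
    have hint (x : ℝ) := intervalIntegrable_of_monotone_mul_exp (monotone_expMean_mul_exp hf) x
      (x + h)
    simp only [ρ, Function.comp_def, intervalIntegral.integral_ofReal, Complex.ofReal_re] at hre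
    simpa [intervalIntegral.integral_sub (hint _), mul_comm h] using hre.add_const (c * h)
  refine (hlim.comp (Real.tendsto_log_atTop.comp tendsto_natCast_atTop_atTop)).congr' ?_
  filter_upwards [eventually_ne_atTop 0] with n hn
  exact expMean_log_natCast hn

end WienerIkehara

section PrimesInAP

open Finset ArithmeticFunction.vonMangoldt

open scoped Nat Topology

/-- The Chebyshev function `θ(n; q, a) = ∑ log p`, summed over the primes `p ≤ n` with
`p ≡ a (mod q)`. -/
noncomputable def thetaAP {q : ℕ} (a : ZMod q) (n : ℕ) : ℝ :=
  ∑ p ∈ n.primesLE with ((p : ℕ) : ZMod q) = a, Real.log p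

lemma thetaAP_nonneg {q : ℕ} (a : ZMod q) (n : ℕ) : 0 ≤ thetaAP a n :=
  sum_nonneg fun p _ ↦ Real.log_natCast_nonneg p

lemma thetaAP_mono {q : ℕ} (a : ZMod q) : Monotone (thetaAP a) := fun _ _ h ↦
  sum_le_sum_of_subset_of_nonneg (filter_subset_filter _ (Nat.primesLE_mono h))
    fun p _ _ ↦ Real.log_natCast_nonneg p

lemma thetaAP_le_theta {q : ℕ} (a : ZMod q) (n : ℕ) : thetaAP a n ≤ Chebyshev.theta n := by
  rw [Chebyshev.theta_eq_sum_primesLE_log]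
  exact sum_le_sum_of_subset_of_nonneg (filter_subset _ _) fun p _ _ ↦ Real.log_natCast_nonneg p

lemma sum_residueClass_sub_thetaAP {q : ℕ} (a : ZMod q) (n : ℕ) :
    ∑ j ∈ Icc 1 n, residueClass a j - thetaAP a n =
      ∑ j ∈ Icc 1 n with ¬ j.Prime, residueClass a j := by
  rw [sub_eq_iff_eq_add', ← sum_filter_add_sum_filter_not (Icc 1 n) Nat.Prime,
    ← Nat.primesLE_eq_filter_Icc_one, add_left_inj, thetaAP, sum_filter]
  refine sum_congr rfl fun p hp ↦ ?_
  rw [residueClass, Set.indicator_apply,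
    ArithmeticFunction.vonMangoldt_apply_prime (Nat.prime_of_mem_primesLE hp)]
  rfl

lemma abs_sum_residueClass_sub_thetaAP_le {q : ℕ} (a : ZMod q) (n : ℕ) :
    |∑ j ∈ Icc 1 n, residueClass a j - thetaAP a n| ≤ Chebyshev.psi n - Chebyshev.theta n := by
  rw [sum_residueClass_sub_thetaAP, abs_of_nonneg (sum_nonneg fun j _ ↦ residueClass_nonneg a j),
    Chebyshev.psi_sub_theta_eq_sum_not_prime, Nat.floor_natCast]
  exact sum_le_sum fun j _ ↦ residueClass_le a j

lemma tendsto_psi_sub_theta_div :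
    Tendsto (fun n : ℕ ↦ (Chebyshev.psi n - Chebyshev.theta n) / n) atTop (𝓝 0) := by
  obtain ⟨C, hC⟩ := Chebyshev.psi_sub_theta_le_mul_sqrt
  have hsqrt : Tendsto (fun n : ℕ ↦ C * (√(n : ℝ))⁻¹) atTop (𝓝 0) := by
    simpa using (tendsto_inv_atTop_zero.comp
      (Real.tendsto_sqrt_atTop.comp tendsto_natCast_atTop_atTop)).const_mul C
  refine squeeze_zero (fun n ↦ ?_) (fun n ↦ ?_) hsqrt
  · exact div_nonneg (sub_nonneg.mpr (Chebyshev.theta_le_psi n)) n.cast_nonneg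
  · calc (Chebyshev.psi n - Chebyshev.theta n) / n ≤ C * √n / n := by gcongr; exact hC n
      _ = C * (√n)⁻¹ := by rw [mul_div_assoc, Real.sqrt_div_self', one_div]

section Asymptotics

variable {q : ℕ} [NeZero q] {a : ZMod q}

lemma tendsto_sum_residueClass_div (ha : IsUnit a) :
    Tendsto (fun n : ℕ ↦ (∑ j ∈ Icc 1 n, residueClass a j) / n) atTop (𝓝 (q.totient : ℝ)⁻¹) := by
  refine tendsto_sum_div_of_continuousOn_LSeries_sub (residueClass_nonneg a)
    (C := Real.log 4 + 4) (fun n ↦ ?_) (continuousOn_LFunctionResidueClassAux a)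
    (by simpa using eqOn_LFunctionResidueClassAux ha)
  calc ∑ j ∈ Icc 1 n, residueClass a j
      ≤ ∑ j ∈ Icc 1 n, ArithmeticFunction.vonMangoldt j := sum_le_sum fun j _ ↦ residueClass_le a j
    _ = Chebyshev.psi n := by rw [Chebyshev.psi, Nat.floor_natCast]; rfl
    _ ≤ (Real.log 4 + 4) * n := Chebyshev.psi_le_const_mul_self n.cast_nonneg

theorem tendsto_thetaAP_div (ha : IsUnit a) :
    Tendsto (fun n : ℕ ↦ thetaAP a n / n) atTop (𝓝 (q.totient : ℝ)⁻¹) := by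
  have hdiff : Tendsto (fun n : ℕ ↦ (∑ j ∈ Icc 1 n, residueClass a j - thetaAP a n) / n)
      atTop (𝓝 0) := by
    refine squeeze_zero_norm (fun n ↦ ?_) tendsto_psi_sub_theta_div
    rw [norm_div, Real.norm_eq_abs, Real.norm_natCast]
    gcongr
    exact abs_sum_residueClass_sub_thetaAP_le a n
  simpa [sub_div] using (tendsto_sum_residueClass_div ha).sub hdiff

end Asymptotics

lemma natCast_zmod_eq_one_iff_dvd_sub_one {d n : ℕ} (hn : n ≠ 0) :
    (n : ZMod d) = 1 ↔ d ∣ n - 1 := by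
  rw [← Nat.modEq_iff_dvd' (Nat.one_le_iff_ne_zero.mpr hn), ← ZMod.natCast_eq_natCast_iff,
    Nat.cast_one, eq_comm]

lemma dvd_prod_progression {m n : ℕ} (hm : m ∣ n !) {d : ℕ} (hd : d.Coprime m) (c : ℕ) :
    m ∣ ∏ j ∈ range n, (d * j + c) := by
  have : NeZero m := ⟨ne_zero_of_dvd_ne_zero n.factorial_ne_zero hm⟩
  obtain ⟨a, ha⟩ : ∃ a : ℕ, (d * a : ZMod m) = c :=
    ⟨((d : ZMod m)⁻¹ * c).val, by
      rw [ZMod.natCast_zmod_val, ← mul_assoc, ZMod.coe_mul_inv_eq_one d hd, one_mul]⟩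
  rw [← ZMod.natCast_eq_zero_iff]
  calc ((∏ j ∈ range n, (d * j + c) : ℕ) : ZMod m)
      = ∏ j ∈ range n, (d : ZMod m) * (a + j) := by
        push_cast
        exact prod_congr rfl fun j _ ↦ by rw [← ha]; ring
    _ = (d : ZMod m) ^ n * (a.ascFactorial n : ℕ) := by
        rw [prod_mul_distrib, prod_const, card_range, Nat.ascFactorial_eq_prod_range]
        push_cast
        rfl
    _ = 0 := by
        rw [(ZMod.natCast_eq_zero_iff _ _).mpr (hm.trans (Nat.factorial_dvd_ascFactorial a n)),
          mul_zero]

lemma le_of_prime_pow_dvd_factorial {p k n : ℕ} (hp : p.Prime) (h : p ^ k ∣ n !) : k ≤ n := by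
  have := Fact.mk hp
  calc k ≤ padicValNat p n ! := (padicValNat_dvd_iff_le n.factorial_ne_zero).mp h
    _ ≤ (p - 1) * padicValNat p n ! := Nat.le_mul_of_pos_left _ (Nat.sub_pos_of_lt hp.one_lt)
    _ ≤ n := by rw [sub_one_mul_padicValNat_factorial]; exact Nat.sub_le _ _

lemma factorial_dvd_pow_mul_prod_progression (d c n : ℕ) :
    n ! ∣ d ^ n * ∏ j ∈ range n, (d * j + c) := by
  rw [Nat.dvd_iff_prime_pow_dvd_dvd]
  intro p k hp hpk
  by_cases hpd : p ∣ d
  · exact dvd_mul_of_dvd_left ((pow_dvd_pow p (le_of_prime_pow_dvd_factorial hp hpk)).trans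
      (pow_dvd_pow_of_dvd hpd n)) _
  · exact dvd_mul_of_dvd_right (dvd_prod_progression hpk
      ((hp.coprime_iff_not_dvd.mpr hpd).symm.pow_right k) c) _

lemma prod_progression_le {d : ℕ} (hd : d ≠ 0) (n : ℕ) :
    ∏ j ∈ range n, (d * j + 1) ≤ d ^ n * n ! := by
  calc ∏ j ∈ range n, (d * j + 1) ≤ ∏ j ∈ range n, d * (j + 1) :=
        prod_le_prod' fun j _ ↦ by rw [mul_add_one]; gcongr; exact Nat.one_le_iff_ne_zero.mpr hd
    _ = d ^ n * n ! := by
        rw [prod_mul_distrib, prod_const, card_range, prod_range_add_one_eq_factorial]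

-- Such primes are distinct factors of `∏ (d * j + 1)` coprime to `n !`, and `n !` divides
-- `d ^ n` times that product.
lemma prod_primes_modEq_one_le {d : ℕ} (hd : d ≠ 0) (n : ℕ) :
    ∏ p ∈ (d * n).primesLE with ((p : ℕ) : ZMod d) = 1 ∧ n < p, p ≤ d ^ (2 * n) := by
  set S := {p ∈ (d * n).primesLE | ((p : ℕ) : ZMod d) = 1 ∧ n < p}
  set P := ∏ j ∈ range n, (d * j + 1)
  have hprime : ∀ p ∈ S, p.Prime := fun p hp ↦ Nat.prime_of_mem_primesLE (mem_filter.mp hp).1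
  have hdvd : ∏ p ∈ S, p ∣ P := by
    refine prod_primes_dvd _ (fun p hp ↦ (hprime p hp).prime) fun p hp ↦ ?_
    obtain ⟨hple, hp1, -⟩ := mem_filter.mp hp
    obtain ⟨j, hj⟩ := (natCast_zmod_eq_one_iff_dvd_sub_one (hprime p hp).ne_zero).mp hp1
    have hpj : p = d * j + 1 := by have := (hprime p hp).pos; omega
    have hjn : j < n := by
      refine lt_of_mul_lt_mul_left (a := d) ?_ d.zero_le
      have := Nat.le_of_mem_primesLE hple
      omega
    rw [hpj]
    exact dvd_prod_of_mem (fun j ↦ d * j + 1) (mem_range.mpr hjn)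
  have hcop : (∏ p ∈ S, p).Coprime n ! := Nat.Coprime.prod_left fun p hp ↦
    (Nat.coprime_factorial_iff (hprime p hp).ne_one).mpr (by
      rw [(hprime p hp).minFac_eq]; exact (mem_filter.mp hp).2.2)
  have hmul : (∏ p ∈ S, p) * n ! ∣ d ^ n * P := hcop.mul_dvd_of_dvd_of_dvd
    (hdvd.mul_left _) (factorial_dvd_pow_mul_prod_progression d 1 n)
  have hpos : 0 < d ^ n * P := by positivity
  refine Nat.le_of_mul_le_mul_right ?_ n.factorial_pos
  calc (∏ p ∈ S, p) * n ! ≤ d ^ n * P := Nat.le_of_dvd hpos hmul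
    _ ≤ d ^ n * (d ^ n * n !) := by gcongr; exact prod_progression_le hd n
    _ = d ^ (2 * n) * n ! := by ring

lemma thetaAP_one_mul_le {d : ℕ} (hd : d ≠ 0) (n : ℕ) :
    thetaAP (1 : ZMod d) (d * n) ≤ thetaAP (1 : ZMod d) n + 2 * n * Real.log d := by
  rw [thetaAP, ← sum_filter_add_sum_filter_not _ (· ≤ n), filter_filter, filter_filter]
  simp only [not_le]
  gcongr
  · refine sum_le_sum_of_subset_of_nonneg (fun p hp ↦ ?_) fun p _ _ ↦ Real.log_natCast_nonneg p
    simp only [mem_filter, Nat.mem_primesLE] at hp ⊢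
    exact ⟨⟨hp.2.2, hp.1.2⟩, hp.2.1⟩
  · have hpos : ∀ p ∈ {p ∈ (d * n).primesLE | ((p : ℕ) : ZMod d) = 1 ∧ n < p}, 0 < p := fun p hp ↦
      (Nat.prime_of_mem_primesLE (mem_filter.mp hp).1).pos
    rw [← Real.log_prod fun p hp ↦ Nat.cast_ne_zero.mpr (hpos p hp).ne', ← Nat.cast_prod]
    calc Real.log _ ≤ Real.log ((d ^ (2 * n) : ℕ) : ℝ) := Real.log_le_log
          (Nat.cast_pos.mpr (prod_pos hpos)) (Nat.cast_le.mpr (prod_primes_modEq_one_le hd n))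
      _ = 2 * n * Real.log d := by push_cast; rw [Real.log_pow]; push_cast; rfl

lemma thetaAP_one_eq_zero {d x : ℕ} (h : x < d ∨ d = 0) : thetaAP (1 : ZMod d) x = 0 := by
  rw [thetaAP, filter_false_of_mem, sum_empty]
  intro p hp hp1
  obtain ⟨hpx, hprime⟩ := Nat.mem_primesLE.mp hp
  have hdvd := (natCast_zmod_eq_one_iff_dvd_sub_one hprime.ne_zero).mp hp1
  have hpos := Nat.sub_pos_of_lt hprime.one_lt
  have hle := Nat.le_of_dvd hpos hdvd
  rcases h with h | rfl
  · omega
  · exact hpos.ne' (zero_dvd_iff.mp hdvd)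

theorem thetaAP_one_le (d x : ℕ) : thetaAP (1 : ZMod d) x ≤ 4 * (Real.log (2 * d) / d) * x := by
  by_cases h : x < d ∨ d = 0
  · rw [thetaAP_one_eq_zero h]
    have : 0 ≤ Real.log (2 * d) := by exact_mod_cast Real.log_natCast_nonneg (2 * d)
    positivity
  push Not at h
  obtain ⟨hdx, hd⟩ := h
  have hd0 : (0 : ℝ) < d := by positivity
  set n := x / d + 1
  have hxn : x ≤ d * n := (Nat.lt_mul_div_succ x hd.bot_lt).le
  have hn : (n : ℝ) ≤ 2 * x / d := by
    have hone : (1 : ℝ) ≤ x / d := (one_le_div₀ hd0).mpr (Nat.cast_le.mpr hdx)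
    calc (n : ℝ) ≤ x / d + 1 := by push_cast [n]; gcongr; exact Nat.cast_div_le
      _ ≤ 2 * x / d := by linarith [mul_div_assoc (2 : ℝ) x d]
  calc thetaAP (1 : ZMod d) x ≤ thetaAP (1 : ZMod d) (d * n) := thetaAP_mono _ hxn
    _ ≤ thetaAP (1 : ZMod d) n + 2 * n * Real.log d := thetaAP_one_mul_le hd n
    _ ≤ Real.log 4 * n + 2 * n * Real.log d := by
      gcongr
      exact (thetaAP_le_theta _ n).trans (Chebyshev.theta_le_log4_mul_x n.cast_nonneg)
    _ = 2 * Real.log (2 * d) * n := by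
      rw [Real.log_mul two_ne_zero hd0.ne', show (4 : ℝ) = 2 ^ 2 by norm_num, Real.log_pow]
      push_cast
      ring
    _ ≤ 2 * Real.log (2 * d) * (2 * x / d) := by
      have : 0 ≤ Real.log (2 * d) := by exact_mod_cast Real.log_natCast_nonneg (2 * d)
      gcongr
    _ = 4 * (Real.log (2 * d) / d) * x := by ring

end PrimesInAP

section ShiftedPrimes

open Finset

open scoped ArithmeticFunction.Moebius Topology

lemma inv_totient_le (d : ℕ) : (d.totient : ℝ)⁻¹ ≤ 4 * (Real.log (2 * d) / d) := by
  rcases eq_or_ne d 0 with rfl | hd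
  · simp
  have := NeZero.mk hd
  refine le_of_tendsto (tendsto_thetaAP_div (isUnit_one (M := ZMod d))) ?_
  filter_upwards [eventually_gt_atTop 0] with n hn
  exact (div_le_iff₀ (Nat.cast_pos.mpr hn)).mpr (thetaAP_one_le d n)

lemma sum_log_mul_sum_divisors_sub_one (h : ℕ → ℝ) (n : ℕ) :
    ∑ p ∈ n.primesLE, Real.log p * ∑ d ∈ (p - 1).divisors, h d =
      ∑' d, h d * thetaAP (1 : ZMod d) n := by
  rw [tsum_eq_sum (s := range (n + 1)) fun d hd ↦ by
    rw [thetaAP_one_eq_zero (Or.inl (by simpa using hd)), mul_zero]]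
  simp only [thetaAP, mul_sum]
  simp_rw [mul_comm (Real.log _)]
  refine sum_comm' fun p d ↦ ?_
  rw [mem_filter, and_assoc]
  refine and_congr_right fun hp ↦ ?_
  obtain ⟨hpn, hprime⟩ := Nat.mem_primesLE.mp hp
  have hpos := Nat.sub_pos_of_lt hprime.one_lt
  rw [natCast_zmod_eq_one_iff_dvd_sub_one hprime.ne_zero, Nat.mem_divisors, mem_range,
    and_iff_left hpos.ne', iff_self_and]
  exact fun hdvd ↦ by have := Nat.le_of_dvd hpos hdvd; omega

theorem tendsto_sum_log_mul_sum_divisors_sub_one_div {h : ℕ → ℝ}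
    (hh : Summable fun d : ℕ ↦ |h d| * (Real.log (2 * d) / d)) :
    Tendsto (fun n : ℕ ↦ (∑ p ∈ n.primesLE, Real.log p * ∑ d ∈ (p - 1).divisors, h d) / n) atTop
      (𝓝 (∑' d : ℕ, h d / d.totient)) := by
  simp_rw [sum_log_mul_sum_divisors_sub_one, ← tsum_div_const, mul_div_assoc]
  refine tendsto_tsum_of_dominated_convergence (hh.mul_left 4) (fun d ↦ ?_)
    ((eventually_gt_atTop 0).mono fun n hn d ↦ ?_)
  · rcases eq_or_ne d 0 with rfl | hd
    · simp [thetaAP_one_eq_zero]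
    · have := NeZero.mk hd
      exact (tendsto_thetaAP_div isUnit_one).const_mul (h d)
  · rw [norm_mul, Real.norm_eq_abs, mul_left_comm,
      Real.norm_of_nonneg (div_nonneg (thetaAP_nonneg 1 n) n.cast_nonneg)]
    gcongr
    exact (div_le_iff₀ (Nat.cast_pos.mpr hn)).mpr (thetaAP_one_le d n)

lemma summable_log_two_mul_div_sq : Summable fun d : ℕ ↦ Real.log (2 * d) / (d : ℝ) ^ 2 := by
  have hpow : Summable fun d : ℕ ↦ 2 * √2 * (d : ℝ) ^ (-(3 / 2) : ℝ) :=
    (Real.summable_nat_rpow.mpr (by norm_num)).mul_left _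
  refine hpow.of_nonneg_of_le (fun d ↦ ?_) fun d ↦ ?_
  · exact div_nonneg (by exact_mod_cast Real.log_natCast_nonneg (2 * d)) (by positivity)
  rcases d.eq_zero_or_pos with rfl | hd
  · simp
  have hd' : (0 : ℝ) < d := Nat.cast_pos.mpr hd
  calc Real.log (2 * d) / (d : ℝ) ^ 2 ≤ (2 * d) ^ (1 / 2 : ℝ) / (1 / 2) / (d : ℝ) ^ 2 := by
        gcongr
        exact Real.log_le_rpow_div (by positivity) (by norm_num)
    _ = 2 * √2 * ((d : ℝ) ^ (1 / 2 : ℝ) / (d : ℝ) ^ (2 : ℝ)) := by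
        rw [Real.mul_rpow zero_le_two hd'.le, Real.sqrt_eq_rpow, Real.rpow_two]
        ring
    _ = 2 * √2 * (d : ℝ) ^ (-(3 / 2) : ℝ) := by rw [← Real.rpow_sub hd']; norm_num

lemma jordanTotient_eq_pow_mul_sum (r n : ℕ) :
    (jordanTotient r n : ℝ) = n ^ r * ∑ d ∈ n.divisors, (μ d : ℝ) / d ^ r := by
  rw [jordanTotient, mul_sum, ← Nat.sum_div_divisors]
  simp only [Int.cast_sum, Int.cast_mul, Int.cast_pow, Int.cast_natCast]
  refine sum_congr rfl fun d hd ↦ ?_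
  obtain ⟨hdvd, hn⟩ := Nat.mem_divisors.mp hd
  have hd0 : (d : ℝ) ≠ 0 := Nat.cast_ne_zero.mpr (Nat.pos_of_mem_divisors hd).ne'
  rw [Nat.div_div_self hdvd hn, Nat.cast_div hdvd hd0, div_pow]
  ring

lemma abs_moebius_div_pow_le {r : ℕ} (hr : 1 ≤ r) (d : ℕ) : |(μ d : ℝ) / d ^ r| ≤ (d : ℝ)⁻¹ := by
  rcases d.eq_zero_or_pos with rfl | hd
  · simp
  have hd1 : (1 : ℝ) ≤ d := Nat.one_le_cast.mpr hd
  have hμ : |(μ d : ℝ)| ≤ 1 := by exact_mod_cast ArithmeticFunction.abs_moebius_le_one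
  rw [abs_div, abs_of_nonneg (by positivity : (0 : ℝ) ≤ d ^ r), ← one_div]
  gcongr
  exact le_self_pow₀ hd1 (Nat.one_le_iff_ne_zero.mp hr)

lemma summable_abs_moebius_div_pow_mul_log {r : ℕ} (hr : 1 ≤ r) :
    Summable fun d : ℕ ↦ |(μ d : ℝ) / d ^ r| * (Real.log (2 * d) / d) := by
  have hlog (d : ℕ) : 0 ≤ Real.log (2 * d) / d :=
    div_nonneg (by exact_mod_cast Real.log_natCast_nonneg (2 * d)) d.cast_nonneg
  refine summable_log_two_mul_div_sq.of_nonneg_of_le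
    (fun d ↦ mul_nonneg (abs_nonneg _) (hlog d)) fun d ↦ ?_
  calc |(μ d : ℝ) / d ^ r| * (Real.log (2 * d) / d) ≤ (d : ℝ)⁻¹ * (Real.log (2 * d) / d) :=
        mul_le_mul_of_nonneg_right (abs_moebius_div_pow_le hr d) (hlog d)
    _ = Real.log (2 * d) / (d : ℝ) ^ 2 := by ring

lemma moebius_div_pow_div_totient_mul (r : ℕ) {m n : ℕ} (hmn : m.Coprime n) :
    (μ (m * n) : ℝ) / (m * n : ℕ) ^ r / (m * n).totient =
      (μ m : ℝ) / m ^ r / m.totient * ((μ n : ℝ) / n ^ r / n.totient) := by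
  rw [ArithmeticFunction.isMultiplicative_moebius.map_mul_of_coprime hmn, Nat.totient_mul hmn]
  push_cast
  ring

lemma tsum_moebius_div_pow_div_totient_prime_pow (r : ℕ) {p : ℕ} (hp : p.Prime) :
    ∑' e : ℕ, (μ (p ^ e) : ℝ) / (p ^ e : ℕ) ^ r / (p ^ e).totient =
      1 - 1 / ((p : ℝ) ^ r * (p - 1)) := by
  rw [tsum_eq_sum (s := range 2) fun e he ↦ ?_, sum_range_succ, sum_range_one, pow_zero, pow_one,
    ArithmeticFunction.moebius_apply_prime hp, ArithmeticFunction.moebius_apply_one,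
    Nat.totient_prime hp, Nat.cast_sub hp.one_le]
  · simp [div_eq_mul_inv, sub_eq_add_neg]
    ring
  · rw [mem_range, not_lt] at he
    rw [ArithmeticFunction.moebius_apply_prime_pow hp (by omega), if_neg (by omega), Int.cast_zero,
      zero_div, zero_div]

theorem tsum_moebius_div_pow_div_totient {r : ℕ} (hr : 1 ≤ r) :
    ∑' d : ℕ, (μ d : ℝ) / d ^ r / d.totient = artinConstantRank r := by
  have hsum : Summable fun d : ℕ ↦ ‖(μ d : ℝ) / d ^ r / d.totient‖ := by
    refine ((summable_abs_moebius_div_pow_mul_log hr).mul_left 4).of_nonneg_of_le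
      (fun d ↦ norm_nonneg _) fun d ↦ ?_
    rw [norm_div, Real.norm_eq_abs, Real.norm_natCast, div_eq_mul_inv, mul_left_comm]
    gcongr
    exact inv_totient_le d
  rw [← EulerProduct.eulerProduct_tprod (by simp) (moebius_div_pow_div_totient_mul r) hsum
    (by simp), artinConstantRank]
  exact tprod_congr fun p ↦ tsum_moebius_div_pow_div_totient_prime_pow r p.prop

end ShiftedPrimes

section WeightedAverages

open Finset Asymptotics

open scoped Topology

lemma eventually_forall_le_abs_le_of_isLittleO {E : ℕ → ℝ} (hE : E =o[atTop] fun n ↦ (n : ℝ))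
    {ε : ℝ} (hε : 0 < ε) : ∀ᶠ N : ℕ in atTop, ∀ n ≤ N, |E n| ≤ ε * N := by
  obtain ⟨m, hm⟩ := eventually_atTop.mp (hE.bound hε)
  have hsmall : ∀ᶠ N : ℕ in atTop, ∀ n ∈ range m, |E n| ≤ ε * N :=
    (eventually_all_finset _).mpr fun n _ ↦
      (tendsto_natCast_atTop_atTop.const_mul_atTop hε).eventually_ge_atTop _
  filter_upwards [hsmall] with N hN n hn
  rcases lt_or_ge n m with hnm | hmn
  · exact hN n (mem_range.mpr hnm)
  · calc |E n| ≤ ε * n := by simpa using hm n hmn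
      _ ≤ ε * N := by gcongr

lemma sum_Icc_mul_eq_sub_sum (e g : ℕ → ℝ) (N : ℕ) :
    ∑ j ∈ Icc 1 N, e j * g j = (∑ j ∈ Icc 1 N, e j) * g N -
      ∑ i ∈ range N, (∑ j ∈ Icc 1 i, e j) * (g (i + 1) - g i) := by
  induction N with
  | zero => simp
  | succ N ih =>
    rw [sum_Icc_succ_top (by omega), sum_Icc_succ_top (by omega), sum_range_succ, ih]
    ring

variable {g : ℕ → ℝ}

lemma abs_sum_Icc_mul_le (hg : Monotone g) (hg0 : ∀ n, 0 ≤ g n) {e : ℕ → ℝ} {B : ℝ} {N : ℕ}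
    (he : ∀ n ≤ N, |∑ j ∈ Icc 1 n, e j| ≤ B) : |∑ j ∈ Icc 1 N, e j * g j| ≤ 2 * (B * g N) := by
  have hB : 0 ≤ B := (abs_nonneg _).trans (he N le_rfl)
  have hinc (i : ℕ) : 0 ≤ g (i + 1) - g i := sub_nonneg.mpr (hg i.le_succ)
  rw [sum_Icc_mul_eq_sub_sum, two_mul]
  refine (abs_sub _ _).trans (add_le_add ?_ ?_)
  · rw [abs_mul, abs_of_nonneg (hg0 N)]
    exact mul_le_mul_of_nonneg_right (he N le_rfl) (hg0 N)
  · calc |∑ i ∈ range N, (∑ j ∈ Icc 1 i, e j) * (g (i + 1) - g i)|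
        ≤ ∑ i ∈ range N, B * (g (i + 1) - g i) := by
          refine (abs_sum_le_sum_abs _ _).trans (sum_le_sum fun i hi ↦ ?_)
          rw [abs_mul, abs_of_nonneg (hinc i)]
          exact mul_le_mul_of_nonneg_right (he i (mem_range.mp hi).le) (hinc i)
      _ = B * (g N - g 0) := by rw [← mul_sum, sum_range_sub]
      _ ≤ B * g N := mul_le_mul_of_nonneg_left (sub_le_self _ (hg0 0)) hB

lemma isLittleO_sum_Icc_mul (hg : Monotone g) (hg0 : ∀ n, 0 ≤ g n) {e : ℕ → ℝ}
    (he : (fun n ↦ ∑ j ∈ Icc 1 n, e j) =o[atTop] fun n ↦ (n : ℝ)) :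
    (fun n ↦ ∑ j ∈ Icc 1 n, e j * g j) =o[atTop] fun n ↦ n * g n := by
  refine isLittleO_iff.mpr fun ε hε ↦ ?_
  filter_upwards [eventually_forall_le_abs_le_of_isLittleO he (half_pos hε)] with N hN
  rw [Real.norm_eq_abs, Real.norm_of_nonneg (mul_nonneg N.cast_nonneg (hg0 N))]
  exact (abs_sum_Icc_mul_le hg hg0 hN).trans_eq (by ring)

lemma isBigO_sum_Icc_of_doubling (hg : Monotone g) (hg0 : ∀ n, 0 ≤ g n) {C : ℝ}
    (hgC : ∀ᶠ n in atTop, g n ≤ C * g (n / 2)) :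
    (fun n ↦ n * g n) =O[atTop] fun n ↦ ∑ j ∈ Icc 1 n, g j := by
  refine IsBigO.of_bound (2 * |C|) (hgC.mono fun n hn ↦ ?_)
  have hsum : ((n - n / 2 : ℕ) : ℝ) * g (n / 2) ≤ ∑ j ∈ Icc 1 n, g j := by
    calc ((n - n / 2 : ℕ) : ℝ) * g (n / 2) = #(Ioc (n / 2) n) • g (n / 2) := by
          rw [Nat.card_Ioc, nsmul_eq_mul]
      _ ≤ ∑ j ∈ Ioc (n / 2) n, g j := card_nsmul_le_sum _ _ _ fun j hj ↦ hg (mem_Ioc.mp hj).1.le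
      _ ≤ ∑ j ∈ Icc 1 n, g j := sum_le_sum_of_subset_of_nonneg
          (fun j hj ↦ mem_Icc.mpr ⟨by have := mem_Ioc.mp hj; omega, (mem_Ioc.mp hj).2⟩)
          fun j _ _ ↦ hg0 j
  have hhalf : (n : ℝ) ≤ 2 * (n - n / 2 : ℕ) := by exact_mod_cast (by omega)
  rw [Real.norm_of_nonneg (mul_nonneg n.cast_nonneg (hg0 n)),
    Real.norm_of_nonneg (sum_nonneg fun j _ ↦ hg0 j)]
  calc n * g n ≤ 2 * (n - n / 2 : ℕ) * (|C| * g (n / 2)) := by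
        gcongr
        · exact hg0 n
        · exact hn.trans (mul_le_mul_of_nonneg_right (le_abs_self C) (hg0 _))
    _ = 2 * |C| * ((n - n / 2 : ℕ) * g (n / 2)) := by ring
    _ ≤ 2 * |C| * ∑ j ∈ Icc 1 n, g j := by gcongr

lemma sum_Icc_pos_of_eventually_pos (hg0 : ∀ n, 0 ≤ g n) (hpos : ∀ᶠ n in atTop, 0 < g n) :
    ∀ᶠ n in atTop, 0 < ∑ j ∈ Icc 1 n, g j := by
  filter_upwards [hpos, eventually_ge_atTop 1] with n hn hn1
  exact hn.trans_le (single_le_sum (fun j _ ↦ hg0 j) (right_mem_Icc.mpr hn1))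

theorem tendsto_sum_mul_div_sum_of_doubling (hg : Monotone g) (hg0 : ∀ n, 0 ≤ g n)
    (hpos : ∀ᶠ n in atTop, 0 < g n) {C : ℝ} (hgC : ∀ᶠ n in atTop, g n ≤ C * g (n / 2))
    {u : ℕ → ℝ} {L : ℝ} (hu : Tendsto (fun n : ℕ ↦ (∑ j ∈ Icc 1 n, u j) / n) atTop (𝓝 L)) :
    Tendsto (fun n ↦ (∑ j ∈ Icc 1 n, u j * g j) / ∑ j ∈ Icc 1 n, g j) atTop (𝓝 L) := by
  have hmean : Tendsto (fun n : ℕ ↦ (∑ j ∈ Icc 1 n, (u j - L)) / n) atTop (𝓝 0) := by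
    rw [← sub_self L]
    refine (hu.sub_const L).congr' ((eventually_ne_atTop 0).mono fun n hn ↦ ?_)
    dsimp only
    rw [sum_sub_distrib, sub_div, sum_const, Nat.card_Icc, add_tsub_cancel_right, nsmul_eq_mul,
      mul_div_cancel_left₀ L (Nat.cast_ne_zero.mpr hn)]
  have he : (fun n ↦ ∑ j ∈ Icc 1 n, (u j - L)) =o[atTop] fun n ↦ (n : ℝ) :=
    (isLittleO_iff_tendsto' ((eventually_ne_atTop 0).mono fun n hn h ↦
      absurd h (Nat.cast_ne_zero.mpr hn))).mpr hmean
  have hsmall := ((isLittleO_sum_Icc_mul hg hg0 he).trans_isBigO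
    (isBigO_sum_Icc_of_doubling hg hg0 hgC)).tendsto_div_nhds_zero
  rw [← zero_add L]
  refine (hsmall.add_const L).congr' ?_
  filter_upwards [sum_Icc_pos_of_eventually_pos hg0 hpos] with n hn
  simp only [sub_mul, sum_sub_distrib, ← mul_sum]
  rw [sub_div, mul_div_cancel_right₀ L hn.ne', sub_add_cancel]

lemma sum_primesLE_eq_sum_Icc_ite (f : ℕ → ℝ) (n : ℕ) :
    ∑ p ∈ n.primesLE, f p = ∑ j ∈ Icc 1 n, if j.Prime then f j else 0 := by
  rw [Nat.primesLE_eq_filter_Icc_one, sum_filter]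

lemma tendsto_sum_primesLE_log_div :
    Tendsto (fun n : ℕ ↦ (∑ p ∈ n.primesLE, Real.log p) / n) atTop (𝓝 1) := by
  simpa [thetaAP, Subsingleton.elim _ (1 : ZMod 1)] using
    tendsto_thetaAP_div (isUnit_one (M := ZMod 1))

theorem tendsto_sum_primesLE_mul_div_sum (hg : Monotone g) (hg0 : ∀ n, 0 ≤ g n)
    (hpos : ∀ᶠ n in atTop, 0 < g n) {C : ℝ} (hgC : ∀ᶠ n in atTop, g n ≤ C * g (n / 2))
    {a : ℕ → ℝ} {L : ℝ}
    (ha : Tendsto (fun n : ℕ ↦ (∑ p ∈ n.primesLE, Real.log p * a p) / n) atTop (𝓝 L)) :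
    Tendsto (fun n : ℕ ↦ (∑ p ∈ n.primesLE, Real.log p * a p * g p) /
      ∑ p ∈ n.primesLE, Real.log p * g p) atTop (𝓝 L) := by
  have hweighted {b : ℕ → ℝ} {M : ℝ}
      (hb : Tendsto (fun n : ℕ ↦ (∑ p ∈ n.primesLE, b p) / n) atTop (𝓝 M)) :
      Tendsto (fun n : ℕ ↦ (∑ p ∈ n.primesLE, b p * g p) / ∑ j ∈ Icc 1 n, g j) atTop (𝓝 M) := by
    simp only [sum_primesLE_eq_sum_Icc_ite] at hb ⊢
    simpa only [ite_mul, zero_mul] using tendsto_sum_mul_div_sum_of_doubling hg hg0 hpos hgC hb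
  have hdiv := (hweighted ha).div (hweighted tendsto_sum_primesLE_log_div) one_ne_zero
  rw [div_one] at hdiv
  refine hdiv.congr' ?_
  filter_upwards [sum_Icc_pos_of_eventually_pos hg0 hpos] with n hn
  exact div_div_div_cancel_right₀ hn.ne' _ _

end WeightedAverages

section PowerWeights

open Finset

open scoped Topology

lemma monotone_sub_one_div_log : Monotone fun n : ℕ ↦ ((n - 1 : ℕ) : ℝ) / Real.log n := by
  intro m n hmn
  rcases le_or_gt m 1 with hm | hm
  · have : m - 1 = 0 := by omega
    simp only [this, Nat.cast_zero, zero_div]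
    exact div_nonneg (Nat.cast_nonneg _) (Real.log_natCast_nonneg n)
  have hm' : (1 : ℝ) < m := Nat.one_lt_cast.mpr hm
  have hmn' : (m : ℝ) ≤ n := Nat.cast_le.mpr hmn
  have hslope : Real.log n / (n - 1) ≤ Real.log m / (m - 1) := by
    have := strictConcaveOn_log_Ioi.concaveOn.neg.secant_mono (a := 1) (x := m) (y := n)
      (by simp) (Set.mem_Ioi.mpr (by linarith)) (Set.mem_Ioi.mpr (by linarith)) (by linarith)
      (by linarith) hmn'
    simpa [neg_div] using this
  have hlog : 0 < Real.log n / (n - 1) :=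
    div_pos (Real.log_pos (by linarith)) (by linarith)
  simpa [Nat.cast_sub hm.le, Nat.cast_sub (hm.le.trans hmn)] using inv_anti₀ hlog hslope

lemma monotone_pow_mul_pow_div_log (k : ℕ) {r : ℕ} (hr : 1 ≤ r) :
    Monotone fun n : ℕ ↦ (n : ℝ) ^ k * ((n - 1 : ℕ) : ℝ) ^ r / Real.log n := by
  obtain ⟨s, rfl⟩ := Nat.exists_eq_add_of_le' hr
  have hpow : Monotone fun n : ℕ ↦ (n : ℝ) ^ k * ((n - 1 : ℕ) : ℝ) ^ s := fun m n hmn ↦ by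
    dsimp only
    gcongr
  convert hpow.mul monotone_sub_one_div_log (fun n ↦ by positivity)
    (fun n ↦ div_nonneg (Nat.cast_nonneg _) (Real.log_natCast_nonneg n)) using 2 with n
  rw [Pi.mul_apply, pow_succ]
  ring

lemma pow_mul_pow_div_log_doubling (k r : ℕ) {n : ℕ} (hn : 4 ≤ n) :
    (n : ℝ) ^ k * ((n - 1 : ℕ) : ℝ) ^ r / Real.log n ≤
      4 ^ (k + r) * (((n / 2 : ℕ) : ℝ) ^ k * ((n / 2 - 1 : ℕ) : ℝ) ^ r /
        Real.log (n / 2 : ℕ)) := by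
  have hn' : 1 < n / 2 := by omega
  have hlog : 0 < Real.log (n / 2 : ℕ) := Real.log_pos (Nat.one_lt_cast.mpr hn')
  have h1 : (n : ℝ) ≤ 4 * (n / 2 : ℕ) := by exact_mod_cast (by omega)
  have h2 : ((n - 1 : ℕ) : ℝ) ≤ 4 * (n / 2 - 1 : ℕ) := by exact_mod_cast (by omega)
  calc (n : ℝ) ^ k * ((n - 1 : ℕ) : ℝ) ^ r / Real.log n
      ≤ (4 * (n / 2 : ℕ)) ^ k * (4 * (n / 2 - 1 : ℕ)) ^ r / Real.log (n / 2 : ℕ) := by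
        gcongr
        exact Nat.div_le_self n 2
    _ = _ := by rw [mul_pow, mul_pow, pow_add]; ring

theorem tendsto_sum_primesLE_mul_pow_div_sum (k : ℕ) {r : ℕ} (hr : 1 ≤ r) {a : ℕ → ℝ} {L : ℝ}
    (ha : Tendsto (fun n : ℕ ↦ (∑ p ∈ n.primesLE, Real.log p * a p) / n) atTop (𝓝 L)) :
    Tendsto (fun n : ℕ ↦ (∑ p ∈ n.primesLE, a p * ((p : ℝ) ^ k * ((p - 1 : ℕ) : ℝ) ^ r)) /
      ∑ p ∈ n.primesLE, (p : ℝ) ^ k * ((p - 1 : ℕ) : ℝ) ^ r) atTop (𝓝 L) := by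
  have hpos : ∀ᶠ n : ℕ in atTop, 0 < (n : ℝ) ^ k * ((n - 1 : ℕ) : ℝ) ^ r / Real.log n := by
    filter_upwards [eventually_ge_atTop 2] with n hn
    have : 0 < n - 1 := by omega
    have := Real.log_pos (Nat.one_lt_cast.mpr hn)
    positivity
  refine (tendsto_sum_primesLE_mul_div_sum (monotone_pow_mul_pow_div_log k hr)
    (fun n ↦ div_nonneg (by positivity) (Real.log_natCast_nonneg n)) hpos
    ((eventually_ge_atTop 4).mono fun n ↦ pow_mul_pow_div_log_doubling k r) ha).congr fun n ↦ ?_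
  have hlog : ∀ p ∈ n.primesLE, Real.log p ≠ 0 := fun p hp ↦
    (Real.log_pos (Nat.one_lt_cast.mpr (Nat.two_le_of_mem_primesLE hp))).ne'
  congr 1 <;> refine sum_congr rfl fun p hp ↦ ?_
  · rw [mul_right_comm, mul_div_cancel₀ _ (hlog p hp), mul_comm]
  · exact mul_div_cancel₀ _ (hlog p hp)

lemma sum_range_nth_prime {M : Type*} [AddCommMonoid M] (f : ℕ → M) (N : ℕ) :
    ∑ i ∈ range N, f (Nat.nth Nat.Prime i) =
      ∑ p ∈ (Nat.nth Nat.Prime N - 1).primesLE, f p := by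
  rw [← Nat.primesBelow_eq_primesLE_sub_one]
  induction N with
  | zero => rw [Nat.nth_prime_zero_eq_two, Nat.primesBelow_two, sum_range_zero, sum_empty]
  | succ N ih =>
    rw [sum_range_succ, ih, Nat.primesBelow, Nat.primesBelow,
      Nat.filter_range_nth_eq_insert_of_infinite Nat.infinite_setOfPred_prime, sum_insert (by simp),
      add_comm]

lemma tendsto_nth_prime_sub_one :
    Tendsto (fun N ↦ Nat.nth Nat.Prime N - 1) atTop atTop :=
  tendsto_atTop_mono (fun N ↦ by have := Nat.add_two_le_nth_prime N; dsimp; omega) tendsto_id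

end PowerWeights

/-- For every `k ≥ 0` and `r ≥ 1`, the ratio
`(∑_{i=1}^N p_i^k J_r(p_i - 1)) / (∑_{i=1}^N p_i^k (p_i - 1)^r)` over the first `N` primes
tends to the rank-`r` Artin constant. -/
theorem artin_rank_ratio_formula (k r : ℕ) (hr : 1 ≤ r) :
    Tendsto (fun N : ℕ =>
        (∑ i ∈ Finset.range N,
          (Nat.nth Nat.Prime i : ℝ) ^ k * (jordanTotient r (Nat.nth Nat.Prime i - 1) : ℝ)) /
        (∑ i ∈ Finset.range N,
          (Nat.nth Nat.Prime i : ℝ) ^ k * ((Nat.nth Nat.Prime i : ℝ) - 1) ^ r))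
      atTop (nhds (artinConstantRank r)) := by
  have hmean := tendsto_sum_log_mul_sum_divisors_sub_one_div
    (summable_abs_moebius_div_pow_mul_log hr)
  rw [tsum_moebius_div_pow_div_totient hr] at hmean
  refine ((tendsto_sum_primesLE_mul_pow_div_sum k hr hmean).comp
    tendsto_nth_prime_sub_one).congr fun N ↦ ?_
  simp only [Function.comp_apply, ← sum_range_nth_prime]
  congr 1 <;> refine Finset.sum_congr rfl fun i _ ↦ ?_
  · rw [jordanTotient_eq_pow_mul_sum]
    ring
  · rw [Nat.cast_pred (Nat.prime_nth_prime i).pos]
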